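/- Let G:[0,∞)→(0,∞) be continuous and nondecreasing with ∫_r^∞ ds/G(s) = ∞ for some r>0. Then for every k ∈ ℕ there exists a smooth compactly supported function χ_k ∈ C_c^∞(ℝⁿ) with values in [0,1] such that χ_k = 1 on the ball B(0,k), χ_k = 0 outside B(0,R_k) for some finite R_k > k, and |∇χ_k(x)| ≤ 2/G(|x|) for all x ∈ ℝⁿ. -/

import Mathlib

open MeasureTheory Set

lemma aux_S : ∃ C : ℝ, 0 < C ∧ ∀ x, ‖deriv Real.smoothTransition x‖ ≤ C := by
  have hd : Continuous (deriv Real.smoothTransition) :=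
    (Real.smoothTransition.contDiff (n := 1)).continuous_deriv (by simp)
  obtain ⟨C, hC⟩ := (isCompact_Icc (a := (0:ℝ)) (b := 1)).exists_bound_of_continuousOn
    hd.continuousOn
  refine ⟨max C 1, by positivity, fun x => ?_⟩
  by_cases hx : x ∈ Icc (0:ℝ) 1
  · exact (hC x hx).trans (le_max_left _ _)
  · have : deriv Real.smoothTransition x = 0 := by
      rcases lt_or_ge x 0 with h | h
      · have : Real.smoothTransition =ᶠ[nhds x] fun _ => 0 := by
          filter_upwards [Iio_mem_nhds h] with y hy
          exact Real.smoothTransition.zero_of_nonpos (le_of_lt hy)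
        rw [this.deriv_eq]; simp
      · have h1 : 1 < x := by
          by_contra hh
          exact hx ⟨h, not_lt.1 hh⟩
        have : Real.smoothTransition =ᶠ[nhds x] fun _ => 1 := by
          filter_upwards [Ioi_mem_nhds h1] with y hy
          exact Real.smoothTransition.one_of_one_le (le_of_lt hy)
        rw [this.deriv_eq]; simp
    rw [this]; simp

theorem stmt1 (n : ℕ) (G : ℝ → ℝ)
    (hGpos : ∀ s, 0 ≤ s → 0 < G s) (hGcont : Continuous G) (hGmono : Monotone G)
    (r : ℝ) (hr : 0 < r)
    (hdiv : ¬ IntegrableOn (fun s => 1 / G s) (Ioi r)) (k : ℕ) :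
    ∃ χ : EuclideanSpace ℝ (Fin n) → ℝ,
      ContDiff ℝ (⊤ : ℕ∞) χ ∧ HasCompactSupport χ ∧
      (∀ x, χ x ∈ Icc (0:ℝ) 1) ∧
      (∀ x, ‖x‖ ≤ (k:ℝ) → χ x = 1) ∧
      (∃ R : ℝ, (k:ℝ) < R ∧ ∀ x, R ≤ ‖x‖ → χ x = 0) ∧
      (∀ x, ‖fderiv ℝ χ x‖ ≤ 2 / G ‖x‖) := by
  obtain ⟨C, hC, hCb⟩ := aux_S
  have hg0 : Continuous (fun t : ℝ => 1 / G (max t 0)) :=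
    continuous_const.div (by fun_prop) (fun t => (hGpos _ (le_max_right _ _)).ne')
  have hg0p : ∀ t : ℝ, 0 < 1 / G (max t 0) := fun t =>
    one_div_pos.2 (hGpos _ (le_max_right _ _))
  obtain ⟨f, hf, hfa, -⟩ := Continuous.exists_contDiff_approx (E := ℝ) (F := ℝ) (⊤ : ℕ∞)
    (hg0.const_mul (3/2)) (hg0.const_mul (1/2)) (fun t => by have := hg0p t; positivity)
  have hfl : ∀ t, 1 / G (max t 0) ≤ f t := fun t => by
    have := hfa t
    rw [Real.dist_eq, abs_lt] at this
    linarith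
  have hfu : ∀ t, f t ≤ 2 * (1 / G (max t 0)) := fun t => by
    have := hfa t
    rw [Real.dist_eq, abs_lt] at this
    linarith
  have hfp : ∀ t, 0 < f t := fun t => (hg0p t).trans_le (hfl t)
  have hfc : Continuous f := hf.continuous
  obtain ⟨a, ha⟩ : ∃ a, a = max r (k + 1 : ℝ) := ⟨_, rfl⟩
  have har : r ≤ a := ha ▸ le_max_left _ _
  have hak : (k:ℝ) + 1 ≤ a := ha ▸ le_max_right _ _
  have ha0 : 0 < a := hr.trans_le har
  have hHd : ∀ t, HasDerivAt (fun t => ∫ s in a..t, f s) (f t) t := fun t =>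
    intervalIntegral.integral_hasDerivAt_right (hfc.intervalIntegrable _ _)
      (hfc.stronglyMeasurableAtFilter _ _) hfc.continuousAt
  obtain ⟨H, hH⟩ : ∃ H : ℝ → ℝ, H = fun t => ∫ s in a..t, f s := ⟨_, rfl⟩
  rw [← hH] at hHd
  have hHs : ContDiff ℝ (⊤ : ℕ∞) H := by
    rw [contDiff_infty_iff_deriv]
    refine ⟨fun t => (hHd t).differentiableAt, ?_⟩
    rw [show deriv H = f from funext fun t => (hHd t).deriv]
    exact hf
  have hHm : Monotone H := monotone_of_deriv_nonneg (fun t => (hHd t).differentiableAt)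
    (fun t => by rw [(hHd t).deriv]; exact (hfp t).le)
  have hHa : H a = 0 := by simp [hH]
  have hex : ∃ R, a < R ∧ C ≤ H R := by
    by_contra hcon
    push Not at hcon
    apply hdiv
    have h1 : IntegrableOn f (Ioi a) := by
      refine integrableOn_Ioi_of_intervalIntegral_norm_bounded (l := Filter.atTop)
        (b := fun t : ℝ => t) C a
        (fun i => (hfc.integrableOn_Icc).mono_set Ioc_subset_Icc_self) Filter.tendsto_id ?_
      filter_upwards [Filter.eventually_gt_atTop a] with i hi
      have := (hcon i hi).le
      simp only [Real.norm_eq_abs, abs_of_pos (hfp _)]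
      simpa [hH] using this
    have h2 : IntegrableOn (fun t : ℝ => 1 / G (max t 0)) (Ioi r) := by
      rw [← Ioc_union_Ioi_eq_Ioi har]
      refine IntegrableOn.union (hg0.integrableOn_Icc.mono_set Ioc_subset_Icc_self) ?_
      refine Integrable.mono' h1 hg0.aestronglyMeasurable (Filter.Eventually.of_forall fun t => ?_)
      rw [Real.norm_eq_abs, abs_of_pos (hg0p t)]
      exact hfl t
    refine h2.congr_fun (fun t ht => ?_) measurableSet_Ioi
    have : 0 ≤ t := (hr.trans ht).le
    simp [max_eq_left this]
  obtain ⟨R, haR, hR⟩ := hex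
  obtain ⟨ψ, hψ⟩ : ∃ ψ : ℝ → ℝ, ψ = fun t => Real.smoothTransition (1 - H t / C) := ⟨_, rfl⟩
  have hψs : ContDiff ℝ (⊤ : ℕ∞) ψ := by
    rw [hψ]
    exact Real.smoothTransition.contDiff.comp (contDiff_const.sub (hHs.div_const C))
  have hψ1 : ∀ t, t ≤ a → ψ t = 1 := fun t ht => by
    rw [hψ]
    refine Real.smoothTransition.one_of_one_le ?_
    have := hHm ht
    rw [hHa] at this
    have := div_nonpos_of_nonpos_of_nonneg this hC.le
    linarith
  have hψ0 : ∀ t, R ≤ t → ψ t = 0 := fun t ht => by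
    rw [hψ]
    refine Real.smoothTransition.zero_of_nonpos ?_
    have := (one_le_div hC).2 (hR.trans (hHm ht))
    linarith
  have hψd : ∀ t, ‖deriv ψ t‖ ≤ f t := fun t => by
    have h1 : HasDerivAt (fun t => 1 - H t / C) (-(f t / C)) t :=
      ((hHd t).div_const C).const_sub 1
    have h2 := (((Real.smoothTransition.contDiff (n := 1)).differentiable (by simp))
      (1 - H t / C)).hasDerivAt.comp t h1
    have h3 : deriv ψ t = deriv Real.smoothTransition (1 - H t / C) * (-(f t / C)) := by
      rw [hψ]; exact h2.deriv
    rw [h3, norm_mul, norm_neg, Real.norm_of_nonneg (div_pos (hfp t) hC).le]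
    calc _ ≤ C * (f t / C) :=
          mul_le_mul_of_nonneg_right (hCb _) (div_pos (hfp t) hC).le
      _ = f t := by field_simp
  have hloc : ∀ x : EuclideanSpace ℝ (Fin n), ‖x‖ < a →
      (fun x : EuclideanSpace ℝ (Fin n) => ψ ‖x‖) =ᶠ[nhds x] fun _ => (1:ℝ) := fun x hx => by
    filter_upwards [continuous_norm.continuousAt.eventually_lt continuousAt_const hx] with y hy
    exact hψ1 _ (le_of_lt hy)
  refine ⟨fun x => ψ ‖x‖, ?_, ?_, ?_, ?_, ⟨R, by linarith, fun x hx => hψ0 _ hx⟩, ?_⟩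
  · rw [contDiff_iff_contDiffAt]
    intro x
    rcases lt_or_ge ‖x‖ a with hx | hx
    · exact contDiffAt_const.congr_of_eventuallyEq (hloc x hx)
    · have hx0 : x ≠ 0 := norm_pos_iff.1 (ha0.trans_le hx)
      exact hψs.contDiffAt.comp x (contDiffAt_norm ℝ hx0)
  · refine HasCompactSupport.intro (isCompact_closedBall (0 : EuclideanSpace ℝ (Fin n)) R) ?_
    intro x hx
    rw [mem_closedBall_zero_iff, not_le] at hx
    exact hψ0 _ hx.le
  · intro x
    simp only [hψ]
    exact ⟨Real.smoothTransition.nonneg _, Real.smoothTransition.le_one _⟩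
  · intro x hx
    exact hψ1 _ (by linarith)
  · intro x
    rcases lt_or_ge ‖x‖ a with hx | hx
    · rw [(hloc x hx).fderiv_eq]
      have := hGpos _ (norm_nonneg x)
      simp
      positivity
    · have hx0 : x ≠ 0 := norm_pos_iff.1 (ha0.trans_le hx)
      have hn : DifferentiableAt ℝ (fun y : EuclideanSpace ℝ (Fin n) => ‖y‖) x :=
        (contDiffAt_norm (n := 1) ℝ hx0).differentiableAt (by simp)
      have hd := ((hψs.differentiable (by simp)) ‖x‖).hasDerivAt.comp_hasFDerivAt x hn.hasFDerivAt
      have h3 : fderiv ℝ (fun x : EuclideanSpace ℝ (Fin n) => ψ ‖x‖) x = _ := hd.fderiv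
      rw [h3, norm_smul]
      have h4 : ‖fderiv ℝ (fun y : EuclideanSpace ℝ (Fin n) => ‖y‖) x‖ ≤ 1 := by
        simpa using norm_fderiv_le_of_lipschitz ℝ (x₀ := x)
          (lipschitzWith_one_norm (E := EuclideanSpace ℝ (Fin n)))
      have h5 := hfu ‖x‖
      rw [max_eq_left (norm_nonneg x), mul_one_div] at h5
      calc _ ≤ f ‖x‖ * 1 := mul_le_mul (hψd _) h4 (norm_nonneg _) (hfp _).le
        _ ≤ _ := by rw [mul_one]; exact h5
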